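/- Let u : ℝ → ℝ → ℝ be a smooth function of (x,t) with u_x(x,t) > 0 for all (x,t), satisfying the 2nd potential Kupershmidt equation u_t = u_{5x} - 5·u_{xx}u_{4x}/u_x - (15/4)·u_{xxx}²/u_x + (65/4)·u_{xx}²u_{xxx}/u_x² - (135/16)·u_{xx}⁴/u_x³. Then h := u_x^{-1/2} satisfies h_t = ∂_x[ h_{4x} - 5·h_xh_{xxx}/h + 5·h_x²h_{xx}/h² ], where ∂_x denotes the partial derivative with respect to x of the bracketed expression. -/

import Mathlib

/-!
Since `u_x > 0`, the function `h = u_x^{-1/2}` is smooth and positive, and `u_x = h⁻²`. Expressing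
`u_xx, …, u_5x` through `h` and its `x`-derivatives, the 2nd potential Kupershmidt equation becomes
`u_t = -2 h_4x / h³ + 4 h_x h_xxx / h⁴ + 3 h_xx² / h⁴ - 4 h_x² h_xx / h⁵`.
Equality of mixed partials (`dt_dx_comm`) gives `∂_x u_t = ∂_t u_x = -2 h_t / h³`, so that
`h_t = -(h³ / 2) ∂_x u_t`; expanding this and the right-hand side of the claim yields the same
rational expression in `h, h_x, …, h_5x`.
-/

/-- Total `x`-derivative of a function of `(x, t)`. -/
noncomputable def dx (f : ℝ → ℝ → ℝ) : ℝ → ℝ → ℝ := fun x t => deriv (fun y => f y t) x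

/-- Total `t`-derivative of a function of `(x, t)`. -/
noncomputable def dt (f : ℝ → ℝ → ℝ) : ℝ → ℝ → ℝ := fun x t => deriv (fun s => f x s) t

/-- The 2nd potential Kupershmidt equation. -/
def Kup2 (u : ℝ → ℝ → ℝ) : Prop :=
  ∀ x t, dt u x t =
    dx (dx (dx (dx (dx u)))) x t
    - 5 * dx (dx u) x t * dx (dx (dx (dx u))) x t / dx u x t
    - (15/4) * (dx (dx (dx u)) x t)^2 / dx u x t
    + (65/4) * (dx (dx u) x t)^2 * dx (dx (dx u)) x t / (dx u x t)^2
    - (135/16) * (dx (dx u) x t)^4 / (dx u x t)^3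

/-- Joint smoothness of a function of `(x, t)` given in curried form. -/
def JointSmooth (f : ℝ → ℝ → ℝ) : Prop :=
  ContDiff ℝ (⊤ : ℕ∞) (fun p : ℝ × ℝ => f p.1 p.2)

namespace JointSmooth

lemma differentiable {f : ℝ → ℝ → ℝ} (hf : JointSmooth f) :
    Differentiable ℝ (fun p : ℝ × ℝ => f p.1 p.2) :=
  ContDiff.differentiable hf (by simp)

lemma hasDerivAt_fst {f : ℝ → ℝ → ℝ} (hf : JointSmooth f) (x t : ℝ) :
    HasDerivAt (fun y => f y t) (fderiv ℝ (fun p : ℝ × ℝ => f p.1 p.2) (x, t) (1, 0)) x :=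
  (hf.differentiable (x, t)).hasFDerivAt.comp_hasDerivAt (f := fun y : ℝ => (y, t)) x
    ((hasDerivAt_id x).prodMk (hasDerivAt_const x t))

lemma hasDerivAt_snd {f : ℝ → ℝ → ℝ} (hf : JointSmooth f) (x t : ℝ) :
    HasDerivAt (fun s => f x s) (fderiv ℝ (fun p : ℝ × ℝ => f p.1 p.2) (x, t) (0, 1)) t :=
  (hf.differentiable (x, t)).hasFDerivAt.comp_hasDerivAt (f := fun s : ℝ => (x, s)) t
    ((hasDerivAt_const t x).prodMk (hasDerivAt_id t))

lemma dx_eq {f : ℝ → ℝ → ℝ} (hf : JointSmooth f) (x t : ℝ) :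
    dx f x t = fderiv ℝ (fun p : ℝ × ℝ => f p.1 p.2) (x, t) (1, 0) :=
  (hf.hasDerivAt_fst x t).deriv

lemma dt_eq {f : ℝ → ℝ → ℝ} (hf : JointSmooth f) (x t : ℝ) :
    dt f x t = fderiv ℝ (fun p : ℝ × ℝ => f p.1 p.2) (x, t) (0, 1) :=
  (hf.hasDerivAt_snd x t).deriv

lemma hasDerivAt_dx {f : ℝ → ℝ → ℝ} (hf : JointSmooth f) (x t : ℝ) :
    HasDerivAt (fun y => f y t) (dx f x t) x :=
  (hf.hasDerivAt_fst x t).differentiableAt.hasDerivAt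

lemma hasDerivAt_dt {f : ℝ → ℝ → ℝ} (hf : JointSmooth f) (x t : ℝ) :
    HasDerivAt (fun s => f x s) (dt f x t) t :=
  (hf.hasDerivAt_snd x t).differentiableAt.hasDerivAt

lemma contDiff_fderiv {f : ℝ → ℝ → ℝ} (hf : JointSmooth f) :
    ContDiff ℝ (⊤ : ℕ∞) (fderiv ℝ (fun p : ℝ × ℝ => f p.1 p.2)) :=
  ContDiff.fderiv_right hf (by simp)

lemma dx {f : ℝ → ℝ → ℝ} (hf : JointSmooth f) : JointSmooth (dx f) := by
  have h := hf.contDiff_fderiv.clm_apply (contDiff_const (c := ((1, 0) : ℝ × ℝ)))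
  unfold JointSmooth
  simpa only [hf.dx_eq] using h

lemma dt {f : ℝ → ℝ → ℝ} (hf : JointSmooth f) : JointSmooth (dt f) := by
  have h := hf.contDiff_fderiv.clm_apply (contDiff_const (c := ((0, 1) : ℝ × ℝ)))
  unfold JointSmooth
  simpa only [hf.dt_eq] using h

/-- Equality of mixed partial derivatives, from the symmetry of the second Fréchet derivative. -/
lemma dt_dx_comm {f : ℝ → ℝ → ℝ} (hf : JointSmooth f) (x t : ℝ) :
    _root_.dt (_root_.dx f) x t = _root_.dx (_root_.dt f) x t := by
  have hd : DifferentiableAt ℝ (fderiv ℝ (fun p : ℝ × ℝ => f p.1 p.2)) (x, t) :=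
    hf.contDiff_fderiv.differentiable (by simp) _
  have hsymm : IsSymmSndFDerivAt ℝ (fun p : ℝ × ℝ => f p.1 p.2) (x, t) :=
    ContDiffAt.isSymmSndFDerivAt (ContDiff.contDiffAt hf)
      (by simpa using WithTop.coe_le_coe.2 (le_top : (2 : ℕ∞) ≤ ⊤))
  rw [hf.dx.dt_eq, hf.dt.dx_eq]
  simp only [hf.dx_eq, hf.dt_eq, Prod.mk.eta]
  rw [fderiv_clm_apply hd (differentiableAt_const _),
    fderiv_clm_apply hd (differentiableAt_const _)]
  simpa using hsymm (0, 1) (1, 0)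

end JointSmooth

/-- The 2nd potential Kupershmidt equation rewritten in terms of `h`, where `u_x = h⁻²`. -/
lemma Kup2.dt_eq_of_dx_eq {u h : ℝ → ℝ → ℝ} (heq : Kup2 u) (hs : JointSmooth h)
    (h0 : ∀ x t, h x t ≠ 0) (hux : dx u = fun x t => 1 / h x t ^ 2) (x t : ℝ) :
    dt u x t = -2 * dx (dx (dx (dx h))) x t / h x t ^ 3
      + 4 * dx h x t * dx (dx (dx h)) x t / h x t ^ 4
      + 3 * dx (dx h) x t ^ 2 / h x t ^ 4
      - 4 * dx h x t ^ 2 * dx (dx h) x t / h x t ^ 5 := by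
  have d0 := hs.hasDerivAt_dx
  have d1 := hs.dx.hasDerivAt_dx
  have d2 := hs.dx.dx.hasDerivAt_dx
  have d3 := hs.dx.dx.dx.hasDerivAt_dx
  have e2 : dx (dx u) = fun x t => -2 * dx h x t / h x t ^ 3 := by
    funext x t
    have hz := h0 x t
    rw [hux]
    refine ((hasDerivAt_const x (1 : ℝ)).div ((d0 x t).pow 2) (pow_ne_zero _ hz)).deriv.trans ?_
    simp
    field_simp
  have e3 : dx (dx (dx u)) = fun x t =>
      6 * dx h x t ^ 2 / h x t ^ 4 - 2 * dx (dx h) x t / h x t ^ 3 := by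
    funext x t
    have hz := h0 x t
    rw [e2]
    refine (((d1 x t).const_mul (-2)).div ((d0 x t).pow 3) (pow_ne_zero _ hz)).deriv.trans ?_
    simp
    field_simp
    ring
  have e4 : dx (dx (dx (dx u))) = fun x t =>
      -24 * dx h x t ^ 3 / h x t ^ 5 + 18 * (dx h x t * dx (dx h) x t) / h x t ^ 4
        - 2 * dx (dx (dx h)) x t / h x t ^ 3 := by
    funext x t
    have hz := h0 x t
    rw [e3]
    refine (((((d1 x t).pow 2).const_mul 6).div ((d0 x t).pow 4) (pow_ne_zero _ hz)).sub
      (((d2 x t).const_mul 2).div ((d0 x t).pow 3) (pow_ne_zero _ hz))).deriv.trans ?_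
    simp
    field_simp
    ring
  have e5 : dx (dx (dx (dx (dx u)))) x t =
      120 * dx h x t ^ 4 / h x t ^ 6 - 144 * dx h x t ^ 2 * dx (dx h) x t / h x t ^ 5
        + 18 * dx (dx h) x t ^ 2 / h x t ^ 4 + 24 * dx h x t * dx (dx (dx h)) x t / h x t ^ 4
        - 2 * dx (dx (dx (dx h))) x t / h x t ^ 3 := by
    have hz := h0 x t
    rw [e4]
    refine ((((((d1 x t).pow 3).const_mul (-24)).div ((d0 x t).pow 5) (pow_ne_zero _ hz)).add
      ((((d1 x t).mul (d2 x t)).const_mul 18).div ((d0 x t).pow 4) (pow_ne_zero _ hz))).sub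
      (((d3 x t).const_mul 2).div ((d0 x t).pow 3) (pow_ne_zero _ hz))).deriv.trans ?_
    simp
    field_simp
    ring
  have hz := h0 x t
  rw [heq x t, e5, e4, e3, e2, hux]
  field_simp
  ring

/-- If `u` solves the 2nd potential Kupershmidt equation with `u_x > 0`, then
`h = u_x^{-1/2}` solves the `x`-differentiated 3rd potential Kupershmidt equation. -/
theorem kup2_potentialisation
    (u : ℝ → ℝ → ℝ)
    (hu : ContDiff ℝ (⊤ : ℕ∞) (fun p : ℝ × ℝ => u p.1 p.2))
    (hux : ∀ x t, 0 < dx u x t)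
    (heq : Kup2 u)
    (h : ℝ → ℝ → ℝ)
    (hh : ∀ x t, h x t = (dx u x t) ^ (-(1/2) : ℝ)) :
    ∀ x t, dt h x t =
      dx (fun x t =>
        dx (dx (dx (dx h))) x t
        - 5 * dx h x t * dx (dx (dx h)) x t / h x t
        + 5 * (dx h x t)^2 * dx (dx h) x t / (h x t)^2) x t := by
  intro x t
  have hus : JointSmooth u := hu
  have hpos : ∀ x t, 0 < h x t := fun x t => by
    rw [hh]
    exact Real.rpow_pos_of_pos (hux x t) _
  have h0 : ∀ x t, h x t ≠ 0 := fun x t => (hpos x t).ne'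
  have hs : JointSmooth h := by
    have hc : ContDiff ℝ (⊤ : ℕ∞) (fun p : ℝ × ℝ => dx u p.1 p.2 ^ (-(1/2) : ℝ)) :=
      ContDiff.rpow_const_of_ne hus.dx (fun p => (hux p.1 p.2).ne')
    unfold JointSmooth
    simpa only [hh] using hc
  have e1 : dx u = fun x t => 1 / h x t ^ 2 := by
    funext x t
    rw [hh, ← Real.rpow_natCast, ← Real.rpow_mul (hux x t).le]
    norm_num [Real.rpow_neg_one]
  have eut := heq.dt_eq_of_dx_eq hs h0 e1
  have hz := h0 x t
  have d0 := hs.hasDerivAt_dx x t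
  have d1 := hs.dx.hasDerivAt_dx x t
  have d2 := hs.dx.dx.hasDerivAt_dx x t
  have d3 := hs.dx.dx.dx.hasDerivAt_dx x t
  have d4 := hs.dx.dx.dx.dx.hasDerivAt_dx x t
  have hcomm := hus.dt_dx_comm x t
  -- `∂_t u_x = -2 h_t / h³`
  have hl : dt (dx u) x t = -2 * dt h x t / h x t ^ 3 := by
    rw [e1]
    refine ((hasDerivAt_const t (1 : ℝ)).div ((hs.hasDerivAt_dt x t).pow 2)
      (pow_ne_zero _ hz)).deriv.trans ?_
    simp
    field_simp
  have hr := (((((d4.const_mul (-2)).div (d0.pow 3) (pow_ne_zero _ hz)).add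
      (((d1.const_mul 4).mul d3).div (d0.pow 4) (pow_ne_zero _ hz))).add
      (((d2.pow 2).const_mul 3).div (d0.pow 4) (pow_ne_zero _ hz))).sub
      ((((d1.pow 2).const_mul 4).mul d2).div (d0.pow 5) (pow_ne_zero _ hz))).deriv
  have hg := ((d4.sub (((d1.const_mul 5).mul d3).div d0 hz)).add
      ((((d1.pow 2).const_mul 5).mul d2).div (d0.pow 2) (pow_ne_zero _ hz))).deriv
  have hut : dt u = _ := funext fun x => funext fun t => eut x t
  rw [hl, hut] at hcomm
  have hk := hcomm.trans hr
  refine Eq.trans ?_ hg.symm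
  have hsolve : dt h x t = -(h x t ^ 3 / 2) * (-2 * dt h x t / h x t ^ 3) := by
    field_simp
  rw [hsolve, hk]
  simp
  field_simp
  ring
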